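/- Let V be a finite nonempty subset of ℝ^N, let E ∈ ℝ^{N×N} be a symmetric positive definite matrix and e ∈ ℝ^N. Then conv(V) ∩ 𝓔(E, e) = ∅ if and only if there exist λ ∈ ℝ^N and μ ∈ ℝ such that λᵀ v > μ for every v ∈ V and sqrt(λᵀ E⁻¹ λ) + λᵀ e < μ (these conditions force λ ≠ 0). -/

import Mathlib

open Matrix

/-!
The support function of the ellipsoid `𝓔(E, e)` is `λ ↦ √(λᵀ E⁻¹ λ) + λᵀ e`: Cauchy–Schwarz for the
form of `E`, applied to `E⁻¹ λ` and `s - e`, bounds `λᵀ (s - e)` by `√(λᵀ E⁻¹ λ)`, with equality at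
a boundary point with outer normal `λ`. The ellipsoid is the intersection of its supporting
half-spaces, hence a compact convex set, so it can be strictly separated from any disjoint closed
convex set. The second condition of the theorem says that the ellipsoid lies strictly on the side
`λᵀ s < μ` of the hyperplane.
-/

section CauchySchwarz

variable {n R K : Type*} [Fintype n]

theorem sq_dotProduct_mulVec_le_of_posSemidef [CommRing R] [LinearOrder R]
    [IsStrictOrderedRing R] [StarRing R] [TrivialStar R] {A : Matrix n n R} (hA : A.PosSemidef)
    (x y : n → R) : (x ⬝ᵥ A *ᵥ y) ^ 2 ≤ (x ⬝ᵥ A *ᵥ x) * (y ⬝ᵥ A *ᵥ y) := by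
  classical
  have hnonneg (u : n → R) : 0 ≤ toBilin' A u u := by
    simpa only [toBilin'_apply', star_trivial] using hA.dotProduct_mulVec_nonneg u
  have hsymm : LinearMap.IsSymm (toBilin' A) := by
    have hAT : Aᵀ = A := isHermitian_iff_isSymm.1 hA.isHermitian
    refine ⟨fun u v => ?_⟩
    simp only [RingHom.id_apply, toBilin'_apply']
    rw [dotProduct_mulVec, ← mulVec_transpose, hAT, dotProduct_comm]
  simpa only [toBilin'_apply'] using
    LinearMap.BilinForm.apply_sq_le_of_symm (toBilin' A) hnonneg hsymm x y

variable [DecidableEq n]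

theorem mulVec_inv_mulVec_of_isUnit [CommRing R] {A : Matrix n n R} (hA : IsUnit A) (x : n → R) :
    A *ᵥ (A⁻¹ *ᵥ x) = x := by
  rw [mulVec_mulVec, mul_nonsing_inv _ ((isUnit_iff_isUnit_det A).1 hA), one_mulVec]

theorem inv_mulVec_mulVec_of_isUnit [CommRing R] {A : Matrix n n R} (hA : IsUnit A) (x : n → R) :
    A⁻¹ *ᵥ (A *ᵥ x) = x := by
  rw [mulVec_mulVec, nonsing_inv_mul _ ((isUnit_iff_isUnit_det A).1 hA), one_mulVec]

theorem sq_dotProduct_le_of_posDef [Field K] [LinearOrder K] [IsStrictOrderedRing K] [StarRing K]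
    [TrivialStar K] {A : Matrix n n K} (hA : A.PosDef) (x y : n → K) :
    (x ⬝ᵥ y) ^ 2 ≤ (x ⬝ᵥ A⁻¹ *ᵥ x) * (y ⬝ᵥ A *ᵥ y) := by
  have h := sq_dotProduct_mulVec_le_of_posSemidef hA.posSemidef y (A⁻¹ *ᵥ x)
  rwa [mulVec_inv_mulVec_of_isUnit hA.isUnit, dotProduct_comm y, dotProduct_comm _ x,
    mul_comm] at h

end CauchySchwarz

section Separation

variable {n : Type*} [Fintype n]

theorem exists_dotProduct_lt_lt_of_isCompact_of_isClosed {s t : Set (n → ℝ)}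
    (hs : Convex ℝ s) (hsc : IsCompact s) (ht : Convex ℝ t) (htc : IsClosed t)
    (hst : Disjoint s t) :
    ∃ (lam : n → ℝ) (μ : ℝ), (∀ x ∈ s, lam ⬝ᵥ x < μ) ∧ ∀ y ∈ t, μ < lam ⬝ᵥ y := by
  classical
  obtain ⟨f, u, v, hfs, huv, hft⟩ := geometric_hahn_banach_compact_closed hs hsc ht htc hst
  obtain ⟨lam, hlam⟩ := (dotProductEquiv ℝ n).surjective f.toLinearMap
  have hf (x : n → ℝ) : lam ⬝ᵥ x = f x := LinearMap.congr_fun hlam x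
  exact ⟨lam, u, fun x hx => (hf x).trans_lt (hfs x hx),
    fun y hy => huv.trans ((hft y hy).trans_eq (hf y).symm)⟩

theorem lt_dotProduct_of_mem_convexHull {V : Set (n → ℝ)} {lam s : n → ℝ} {μ : ℝ}
    (hV : ∀ v ∈ V, μ < lam ⬝ᵥ v) (hs : s ∈ convexHull ℝ V) : μ < lam ⬝ᵥ s :=
  convexHull_min (t := {x | μ < lam ⬝ᵥ x}) hV
    (convex_halfSpace_gt ⟨dotProduct_add lam, fun c => dotProduct_smul c lam⟩ μ) hs

end Separation

section Ellipsoid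

variable {n : Type*} [Fintype n] {E : Matrix n n ℝ}

/-- The ellipsoid `𝓔(E, e)` with centre `e`. It is defined for every matrix `E`, but is an
ellipsoid only when `E` is positive definite. -/
def ellipsoid (E : Matrix n n ℝ) (e : n → ℝ) : Set (n → ℝ) :=
  {s | (s - e) ⬝ᵥ E *ᵥ (s - e) ≤ 1}

section Support

variable [DecidableEq n]

/-- The support function of `ellipsoid E e`, given by its closed formula; that the formula is the
maximum of `lam ⬝ᵥ s` over the ellipsoid, for positive definite `E`, is
`isGreatest_ellipsoidSupport`. -/
noncomputable def ellipsoidSupport (E : Matrix n n ℝ) (e lam : n → ℝ) : ℝ :=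
  √(lam ⬝ᵥ E⁻¹ *ᵥ lam) + lam ⬝ᵥ e

theorem dotProduct_le_ellipsoidSupport (hE : E.PosDef) {e s : n → ℝ} (hs : s ∈ ellipsoid E e)
    (lam : n → ℝ) : lam ⬝ᵥ s ≤ ellipsoidSupport E e lam := by
  have hnonneg : 0 ≤ lam ⬝ᵥ E⁻¹ *ᵥ lam := by
    simpa only [star_trivial] using hE.inv.posSemidef.dotProduct_mulVec_nonneg lam
  have hle : lam ⬝ᵥ (s - e) ≤ √(lam ⬝ᵥ E⁻¹ *ᵥ lam) :=
    Real.le_sqrt_of_sq_le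
      ((sq_dotProduct_le_of_posDef hE lam (s - e)).trans (mul_le_of_le_one_right hnonneg hs))
  rw [dotProduct_sub] at hle
  exact sub_le_iff_le_add.1 hle

theorem isGreatest_ellipsoidSupport (hE : E.PosDef) (e lam : n → ℝ) :
    IsGreatest ((lam ⬝ᵥ ·) '' ellipsoid E e) (ellipsoidSupport E e lam) := by
  refine ⟨?_, Set.forall_mem_image.2 fun s hs => dotProduct_le_ellipsoidSupport hE hs lam⟩
  set q := lam ⬝ᵥ E⁻¹ *ᵥ lam with hq
  -- If `q = 0`, then `(√q)⁻¹ = 0` and the chosen point is the centre `e`, as it should be.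
  have hscale : (√q)⁻¹ * q = √q := by rw [inv_mul_eq_div, Real.div_sqrt]
  refine ⟨(√q)⁻¹ • (E⁻¹ *ᵥ lam) + e, ?_, ?_⟩
  · have hform : E⁻¹ *ᵥ lam ⬝ᵥ E *ᵥ (E⁻¹ *ᵥ lam) = q := by
      rw [mulVec_inv_mulVec_of_isUnit hE.isUnit, dotProduct_comm]
    simp only [ellipsoid, Set.mem_ofPred_eq, add_sub_cancel_right, mulVec_smul, smul_dotProduct,
      dotProduct_smul, smul_eq_mul, hform, hscale]
    exact inv_mul_le_one
  · simp only [dotProduct_add, dotProduct_smul, smul_eq_mul, ← hq, hscale, ellipsoidSupport]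

theorem forall_mem_ellipsoid_dotProduct_lt_iff (hE : E.PosDef) {e lam : n → ℝ} {μ : ℝ} :
    (∀ s ∈ ellipsoid E e, lam ⬝ᵥ s < μ) ↔ ellipsoidSupport E e lam < μ := by
  rw [(isGreatest_ellipsoidSupport hE e lam).lt_iff, Set.forall_mem_image]

theorem mem_ellipsoid_iff (hE : E.PosDef) {e s : n → ℝ} :
    s ∈ ellipsoid E e ↔ ∀ lam, lam ⬝ᵥ s ≤ ellipsoidSupport E e lam := by
  refine ⟨dotProduct_le_ellipsoidSupport hE, fun h => ?_⟩
  -- Test with the normal `E (s - e)`: half the gradient of the quadratic form at `s`.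
  have hnormal : (s - e) ⬝ᵥ E *ᵥ (s - e) ≤ √((s - e) ⬝ᵥ E *ᵥ (s - e)) := by
    have hs := h (E *ᵥ (s - e))
    rwa [ellipsoidSupport, inv_mulVec_mulVec_of_isUnit hE.isUnit, ← sub_le_iff_le_add,
      ← dotProduct_sub, dotProduct_comm _ (s - e)] at hs
  exact Real.le_sqrt_self_iff.1 hnormal

theorem ellipsoid_eq_iInter_halfSpace (hE : E.PosDef) (e : n → ℝ) :
    ellipsoid E e = ⋂ lam, {s | lam ⬝ᵥ s ≤ ellipsoidSupport E e lam} := by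
  ext s
  rw [mem_ellipsoid_iff hE, Set.mem_iInter]
  rfl

end Support

theorem convex_ellipsoid (hE : E.PosDef) (e : n → ℝ) : Convex ℝ (ellipsoid E e) := by
  classical
  rw [ellipsoid_eq_iInter_halfSpace hE]
  exact convex_iInter fun lam =>
    convex_halfSpace_le ⟨dotProduct_add lam, fun c => dotProduct_smul c lam⟩ _

theorem isClosed_ellipsoid (E : Matrix n n ℝ) (e : n → ℝ) : IsClosed (ellipsoid E e) :=
  isClosed_le (by fun_prop) continuous_const

theorem isBounded_ellipsoid (hE : E.PosDef) (e : n → ℝ) :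
    Bornology.IsBounded (ellipsoid E e) := by
  classical
  refine Bornology.forall_isBounded_image_eval_iff.1 fun i => ?_
  refine (Metric.isBounded_Icc (-ellipsoidSupport E e (-Pi.single i 1))
    (ellipsoidSupport E e (Pi.single i 1))).subset (Set.image_subset_iff.2 fun s hs => ?_)
  have hupper := dotProduct_le_ellipsoidSupport hE hs (Pi.single i 1)
  have hlower := dotProduct_le_ellipsoidSupport hE hs (-Pi.single i 1)
  rw [single_one_dotProduct] at hupper
  rw [neg_dotProduct, single_one_dotProduct] at hlower
  exact ⟨neg_le.1 hlower, hupper⟩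

theorem isCompact_ellipsoid (hE : E.PosDef) (e : n → ℝ) : IsCompact (ellipsoid E e) :=
  Metric.isCompact_of_isClosed_isBounded (isClosed_ellipsoid E e) (isBounded_ellipsoid hE e)

end Ellipsoid

theorem stmt_6_general {n : Type*} [Fintype n] [DecidableEq n] {V : Set (n → ℝ)}
    (hV : IsClosed (convexHull ℝ V)) {E : Matrix n n ℝ} (hE : E.PosDef) (e : n → ℝ) :
    convexHull ℝ V ∩ ellipsoid E e = ∅ ↔
      ∃ (lam : n → ℝ) (μ : ℝ), (∀ v ∈ V, μ < lam ⬝ᵥ v) ∧ ellipsoidSupport E e lam < μ := by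
  simp only [← Set.disjoint_iff_inter_eq_empty, ← forall_mem_ellipsoid_dotProduct_lt_iff hE]
  constructor
  · intro hdisj
    obtain ⟨lam, μ, hell, hhull⟩ := exists_dotProduct_lt_lt_of_isCompact_of_isClosed
      (convex_ellipsoid hE e) (isCompact_ellipsoid hE e) (convex_convexHull ℝ V) hV hdisj.symm
    exact ⟨lam, μ, fun v hv => hhull v (subset_convexHull ℝ V hv), hell⟩
  · rintro ⟨lam, μ, hvert, hell⟩
    exact Set.disjoint_left.2 fun s hhull hs =>
      (lt_dotProduct_of_mem_convexHull hvert hhull).not_gt (hell s hs)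

/-- A polytope `conv(V)` with finite nonempty vertex set `V` and an ellipsoid `𝓔(E, e)`
are disjoint iff there exist `λ ∈ ℝ^N` and `μ ∈ ℝ` with `λᵀ v > μ` for every `v ∈ V`
and `sqrt (λᵀ E⁻¹ λ) + λᵀ e < μ`. -/
theorem stmt_6 (N : ℕ) (V : Set (Fin N → ℝ)) (hV : V.Finite) (hVne : V.Nonempty)
    (E : Matrix (Fin N) (Fin N) ℝ) (hE : E.PosDef) (e : Fin N → ℝ) :
    convexHull ℝ V ∩ {s : Fin N → ℝ | (s - e) ⬝ᵥ E *ᵥ (s - e) ≤ 1} = ∅ ↔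
      ∃ (lam : Fin N → ℝ) (μ : ℝ),
        (∀ v ∈ V, μ < lam ⬝ᵥ v) ∧
        Real.sqrt (lam ⬝ᵥ E⁻¹ *ᵥ lam) + lam ⬝ᵥ e < μ :=
  stmt_6_general (hV.isClosed_convexHull ℝ) hE e
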